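/- Let ε > 0, b > 0, and let ξ ∈ (0, ξ₀) be such that the point c = (0, bε, 0) satisfies d_g(u, c) = bε √((1 + ξ)² a²/b² + 1), where u = (0, 0, aε). Set v = (0, 0, −aε), w = (aε(1 + ξ), 0, 0), and p = (−aε(1 + ξ), 0, 0). Then both c and −c = (0, −bε, 0) are equidistant in the geodesic distance from all four points: d_g(c, u) = d_g(c, v) = d_g(c, w) = d_g(c, p), and d_g(−c, u) = d_g(−c, v) = d_g(−c, w) = d_g(−c, p); that is, the tetrahedron {u, v, w, p} has the two distinct circumcentres c and −c. -/

import Mathlib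

open Real MeasureTheory

noncomputable section

/-- `ℝ³` with the Euclidean norm. -/
abbrev E3 : Type := EuclideanSpace ℝ (Fin 3)

/-- The bump function `f(y) = A (1 + cos (π y))`. -/
def f (A y : ℝ) : ℝ := A * (1 + Real.cos (Real.pi * y))

/-- The g-length of a path `γ` in the perturbed metric:
`L_g(γ) = ∫₀¹ √(γ₁′(t)² + γ₂′(t)² + (1 + f(γ₂(t))) γ₃′(t)²) dt`. -/
def Lg (A : ℝ) (γ : ℝ → E3) : ℝ :=
  ∫ t in (0:ℝ)..1,
    Real.sqrt ((deriv γ t 0) ^ 2 + (deriv γ t 1) ^ 2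
      + (1 + f A (γ t 1)) * (deriv γ t 2) ^ 2)

/-- The geodesic distance: the infimum of g-lengths of C¹ paths from `p` to `q`. -/
def dg (A : ℝ) (p q : E3) : ℝ :=
  sInf {L : ℝ | ∃ γ : ℝ → E3,
    ContDiff ℝ 1 γ ∧ γ 0 = p ∧ γ 1 = q ∧ L = Lg A γ}

/-- A point of `ℝ³` from its three coordinates. -/
def pt (x y z : ℝ) : E3 := (EuclideanSpace.equiv (Fin 3) ℝ).symm ![x, y, z]

/-- `a = 1/√2`. -/
def a : ℝ := 1 / Real.sqrt 2

/-- `ξ₀ = √(1 + f(0)) − 1`. -/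
def ξ₀ (A : ℝ) : ℝ := Real.sqrt (1 + f A 0) - 1

/-!
The metric `dx² + dy² + (1 + f(y)) dz²` is invariant under the reflections in the three coordinate
planes, since `f` is even. The reflection `z ↦ -z` exchanges `u` and `v` and fixes `c`, the
reflection `x ↦ -x` exchanges `w` and `p` and fixes `c`, and `y ↦ -y` carries `c` to `-c` and fixes
the four vertices; so only `d_g(c, u) = d_g(c, w)` is at stake. As `f ≥ 0`, the metric dominates the
Euclidean one and agrees with it on vectors without `z`-component, such as `w - c`. So `d_g(c, w)`
is the Euclidean distance `√((aε(1 + ξ))² + (bε)²)`, which is the value prescribed for `d_g(u, c)`.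
-/

section CurveDist

variable {E E' : Type*} [NormedAddCommGroup E] [NormedSpace ℝ E]
  [NormedAddCommGroup E'] [NormedSpace ℝ E']

/-- The length of a curve `γ : [0, 1] → E` with respect to a speed function `F`, where `F x v` is
the length of the tangent vector `v` at the point `x`. -/
def curveLength (F : E → E → ℝ) (γ : ℝ → E) : ℝ :=
  ∫ t in (0 : ℝ)..1, F (γ t) (deriv γ t)

/-- The set of lengths of the C¹ curves from `p` to `q`. The curves are defined and C¹ on all of
`ℝ`, as in `dg`. -/
def curveLengths (F : E → E → ℝ) (p q : E) : Set ℝ :=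
  {L | ∃ γ : ℝ → E, ContDiff ℝ 1 γ ∧ γ 0 = p ∧ γ 1 = q ∧ L = curveLength F γ}

/-- The distance defined by a speed function: the infimum of the lengths of C¹ curves. -/
def curveDist (F : E → E → ℝ) (p q : E) : ℝ := sInf (curveLengths F p q)

variable {F : E → E → ℝ} {F' : E' → E' → ℝ}

lemma curveLength_comp_continuousLinearEquiv (Φ : E ≃L[ℝ] E')
    (hΦ : ∀ x v, F' (Φ x) (Φ v) = F x v) (γ : ℝ → E) :
    curveLength F' (Φ ∘ γ) = curveLength F γ := by
  have deriv_comp (t : ℝ) : deriv (Φ ∘ γ) t = Φ (deriv γ t) := by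
    simp only [← fderiv_apply_one_eq_deriv, Φ.comp_fderiv, ContinuousLinearMap.comp_apply,
      ContinuousLinearEquiv.coe_coe]
  simp only [curveLength, deriv_comp, Function.comp_apply, hΦ]

lemma curveLengths_subset_map (Φ : E ≃L[ℝ] E') (hΦ : ∀ x v, F' (Φ x) (Φ v) = F x v) (p q : E) :
    curveLengths F p q ⊆ curveLengths F' (Φ p) (Φ q) := by
  rintro _ ⟨γ, hγ, rfl, rfl, rfl⟩
  exact ⟨Φ ∘ γ, Φ.contDiff.comp hγ, rfl, rfl,
    (curveLength_comp_continuousLinearEquiv Φ hΦ γ).symm⟩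

lemma curveDist_map (Φ : E ≃L[ℝ] E') (hΦ : ∀ x v, F' (Φ x) (Φ v) = F x v) (p q : E) :
    curveDist F' (Φ p) (Φ q) = curveDist F p q := by
  have hΦ_symm (x v : E') : F (Φ.symm x) (Φ.symm v) = F' x v := by simp [← hΦ]
  refine congrArg sInf (Set.Subset.antisymm ?_ (curveLengths_subset_map Φ hΦ p q))
  simpa using curveLengths_subset_map Φ.symm hΦ_symm (Φ p) (Φ q)

lemma curveLength_comp_one_sub (hF : ∀ x v, F x (-v) = F x v) (γ : ℝ → E) :
    curveLength F (fun t ↦ γ (1 - t)) = curveLength F γ := by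
  simpa [curveLength, deriv_comp_const_sub, hF] using
    intervalIntegral.integral_comp_sub_left (a := 0) (b := 1) (fun t ↦ F (γ t) (deriv γ t)) 1

lemma curveLengths_subset_swap (hF : ∀ x v, F x (-v) = F x v) (p q : E) :
    curveLengths F p q ⊆ curveLengths F q p := by
  rintro _ ⟨γ, hγ, rfl, rfl, rfl⟩
  exact ⟨fun t ↦ γ (1 - t), by fun_prop, by simp, by simp, (curveLength_comp_one_sub hF γ).symm⟩

lemma curveDist_comm (hF : ∀ x v, F x (-v) = F x v) (p q : E) :
    curveDist F p q = curveDist F q p :=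
  congrArg sInf <|
    Set.Subset.antisymm (curveLengths_subset_swap hF p q) (curveLengths_subset_swap hF q p)

lemma norm_sub_le_curveLength (hF : Continuous ↿F) (hle : ∀ x v, ‖v‖ ≤ F x v) {γ : ℝ → E}
    (hγ : ContDiff ℝ 1 γ) : ‖γ 1 - γ 0‖ ≤ curveLength F γ := by
  have speed_continuous : Continuous fun t ↦ F (γ t) (deriv γ t) :=
    hF.comp (hγ.continuous.prodMk hγ.continuous_deriv_one)
  exact norm_sub_le_integral_of_norm_deriv_le_of_le zero_le_one hγ.continuous.continuousOn
    hγ.differentiable_one.differentiableOn (.of_forall fun t _ ↦ hle _ _)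
    (speed_continuous.intervalIntegrable _ _)

lemma curveLength_lineMap {p q : E} {ℓ : ℝ}
    (h : ∀ t ∈ Set.Icc (0 : ℝ) 1, F (AffineMap.lineMap p q t) (q - p) = ℓ) :
    curveLength F (AffineMap.lineMap p q) = ℓ := by
  have integrand_eq : Set.EqOn
      (fun t : ℝ ↦ F (AffineMap.lineMap p q t) (deriv (AffineMap.lineMap p q) t))
      (fun _ ↦ ℓ) (Set.uIcc 0 1) := fun t ht ↦ by
    simpa [AffineMap.hasDerivAt_lineMap.deriv] using h t (by simpa using ht)
  rw [curveLength, intervalIntegral.integral_congr integrand_eq]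
  simp

lemma curveDist_eq_norm_sub (hF : Continuous ↿F) (hle : ∀ x v, ‖v‖ ≤ F x v) {p q : E}
    (hpq : ∀ t ∈ Set.Icc (0 : ℝ) 1, F (AffineMap.lineMap p q t) (q - p) = ‖q - p‖) :
    curveDist F p q = ‖q - p‖ := by
  refine IsLeast.csInf_eq ⟨?_, ?_⟩
  · exact ⟨AffineMap.lineMap p q, by fun_prop, by simp, by simp, (curveLength_lineMap hpq).symm⟩
  · rintro _ ⟨γ, hγ, rfl, rfl, rfl⟩
    exact norm_sub_le_curveLength hF hle hγ

end CurveDist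

section WarpedMetric

/-- The length of the tangent vector `v` at `x` for the metric `dx² + dy² + (1 + φ(y)) dz²`. -/
def warpedSpeed (φ : ℝ → ℝ) (x v : E3) : ℝ :=
  √(v 0 ^ 2 + v 1 ^ 2 + (1 + φ (x 1)) * v 2 ^ 2)

lemma dg_eq_curveDist (A : ℝ) : dg A = curveDist (warpedSpeed (f A)) := rfl

/-- The reflection of `ℝ^ι` in the `i`-th coordinate hyperplane. -/
def coordReflection {ι : Type*} [Fintype ι] [DecidableEq ι] (i : ι) :
    EuclideanSpace ℝ ι ≃ₗᵢ[ℝ] EuclideanSpace ℝ ι :=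
  .piLpCongrRight 2 fun j ↦ if j = i then .neg ℝ else .refl ℝ ℝ

lemma coordReflection_apply {ι : Type*} [Fintype ι] [DecidableEq ι] (i j : ι)
    (x : EuclideanSpace ℝ ι) : coordReflection i x j = if j = i then -x j else x j := by
  by_cases h : j = i <;> simp [coordReflection, h]

lemma coordReflection_zero_pt (x y z : ℝ) : coordReflection 0 (pt x y z) = pt (-x) y z := by
  ext j; fin_cases j <;> simp [coordReflection_apply, pt]

lemma coordReflection_one_pt (x y z : ℝ) : coordReflection 1 (pt x y z) = pt x (-y) z := by
  ext j; fin_cases j <;> simp [coordReflection_apply, pt]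

lemma coordReflection_two_pt (x y z : ℝ) : coordReflection 2 (pt x y z) = pt x y (-z) := by
  ext j; fin_cases j <;> simp [coordReflection_apply, pt]

variable {φ : ℝ → ℝ}

lemma warpedSpeed_neg (x v : E3) : warpedSpeed φ x (-v) = warpedSpeed φ x v := by
  simp [warpedSpeed]

lemma continuous_warpedSpeed (hφ : Continuous φ) : Continuous ↿(warpedSpeed φ) := by
  change Continuous fun x : E3 × E3 ↦
    √(x.2 0 ^ 2 + x.2 1 ^ 2 + (1 + φ (x.1 1)) * x.2 2 ^ 2)
  fun_prop

lemma norm_le_warpedSpeed (hφ : ∀ y, 0 ≤ φ y) (x v : E3) : ‖v‖ ≤ warpedSpeed φ x v := by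
  simp only [EuclideanSpace.norm_eq, Fin.sum_univ_three, Real.norm_eq_abs, sq_abs, warpedSpeed]
  gcongr
  exact le_mul_of_one_le_left (sq_nonneg _) (by linarith [hφ (x 1)])

lemma warpedSpeed_eq_norm (x : E3) {v : E3} (hv : v 2 = 0) : warpedSpeed φ x v = ‖v‖ := by
  simp [warpedSpeed, EuclideanSpace.norm_eq, Fin.sum_univ_three, hv]

lemma warpedSpeed_coordReflection (hφ : φ.Even) (i : Fin 3) (x v : E3) :
    warpedSpeed φ (coordReflection i x) (coordReflection i v) = warpedSpeed φ x v := by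
  fin_cases i <;> simp [warpedSpeed, coordReflection_apply, hφ (x 1)]

lemma curveDist_warpedSpeed_coordReflection (hφ : φ.Even) (i : Fin 3) (p q : E3) :
    curveDist (warpedSpeed φ) (coordReflection i p) (coordReflection i q) =
      curveDist (warpedSpeed φ) p q :=
  curveDist_map (coordReflection i).toContinuousLinearEquiv (warpedSpeed_coordReflection hφ i) p q

lemma curveDist_warpedSpeed_eq_norm_sub (hcont : Continuous φ) (hnonneg : ∀ y, 0 ≤ φ y) {p q : E3}
    (hpq : p 2 = q 2) : curveDist (warpedSpeed φ) p q = ‖q - p‖ :=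
  curveDist_eq_norm_sub (continuous_warpedSpeed hcont) (norm_le_warpedSpeed hnonneg)
    fun _ _ ↦ warpedSpeed_eq_norm _ (by simp [hpq])

lemma curveDist_warpedSpeed_pt (hcont : Continuous φ) (hnonneg : ∀ y, 0 ≤ φ y)
    (x y x' y' z : ℝ) : curveDist (warpedSpeed φ) (pt x y z) (pt x' y' z) =
      √((x' - x) ^ 2 + (y' - y) ^ 2) := by
  rw [curveDist_warpedSpeed_eq_norm_sub hcont hnonneg (by simp [pt])]
  simp [EuclideanSpace.norm_eq, Fin.sum_univ_three, pt]

end WarpedMetric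

section Circumcentre

/-- `c` is a circumcentre, for the distance function `d`, of the tetrahedron `{u, v, w, p}`. -/
def IsCircumcentre {X : Type*} (d : X → X → ℝ) (c u v w p : X) : Prop :=
  d c u = d c v ∧ d c v = d c w ∧ d c w = d c p

lemma IsCircumcentre.map {X : Type*} {d : X → X → ℝ} {c u v w p : X}
    (h : IsCircumcentre d c u v w p) {Φ : X → X}
    (hΦ : ∀ x y, d (Φ x) (Φ y) = d x y) :
    IsCircumcentre d (Φ c) (Φ u) (Φ v) (Φ w) (Φ p) := by
  simpa only [IsCircumcentre, hΦ] using h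

variable {φ : ℝ → ℝ} {s r h : ℝ}

lemma isCircumcentre_pt (hcont : Continuous φ) (heven : φ.Even) (hnonneg : ∀ y, 0 ≤ φ y)
    (hc : curveDist (warpedSpeed φ) (pt 0 0 s) (pt 0 h 0) = √(r ^ 2 + h ^ 2)) :
    IsCircumcentre (curveDist (warpedSpeed φ)) (pt 0 h 0)
      (pt 0 0 s) (pt 0 0 (-s)) (pt r 0 0) (pt (-r) 0 0) := by
  set d := curveDist (warpedSpeed φ)
  have hcu : d (pt 0 h 0) (pt 0 0 s) = √(r ^ 2 + h ^ 2) :=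
    (curveDist_comm warpedSpeed_neg _ _).trans hc
  have hcw : d (pt 0 h 0) (pt r 0 0) = √(r ^ 2 + h ^ 2) := by
    simpa using curveDist_warpedSpeed_pt hcont hnonneg 0 h r 0 0
  have hcv : d (pt 0 h 0) (pt 0 0 (-s)) = d (pt 0 h 0) (pt 0 0 s) := by
    simpa [coordReflection_two_pt] using
      curveDist_warpedSpeed_coordReflection heven 2 (pt 0 h 0) (pt 0 0 s)
  have hcp : d (pt 0 h 0) (pt (-r) 0 0) = d (pt 0 h 0) (pt r 0 0) := by
    simpa [coordReflection_zero_pt] using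
      curveDist_warpedSpeed_coordReflection heven 0 (pt 0 h 0) (pt r 0 0)
  exact ⟨hcv.symm, (hcv.trans hcu).trans hcw.symm, hcp.symm⟩

theorem two_circumcentres_general (hcont : Continuous φ) (heven : φ.Even)
    (hnonneg : ∀ y, 0 ≤ φ y)
    (hc : curveDist (warpedSpeed φ) (pt 0 0 s) (pt 0 h 0) = √(r ^ 2 + h ^ 2)) :
    IsCircumcentre (curveDist (warpedSpeed φ)) (pt 0 h 0)
        (pt 0 0 s) (pt 0 0 (-s)) (pt r 0 0) (pt (-r) 0 0) ∧
      IsCircumcentre (curveDist (warpedSpeed φ)) (pt 0 (-h) 0)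
        (pt 0 0 s) (pt 0 0 (-s)) (pt r 0 0) (pt (-r) 0 0) := by
  have hpos := isCircumcentre_pt hcont heven hnonneg hc
  refine ⟨hpos, ?_⟩
  simpa only [coordReflection_one_pt, neg_zero] using
    hpos.map (curveDist_warpedSpeed_coordReflection heven 1)

end Circumcentre

lemma continuous_f (A : ℝ) : Continuous (f A) := by
  unfold f
  fun_prop

lemma f_even (A : ℝ) : (f A).Even := fun y ↦ by simp [f]

lemma f_nonneg {A : ℝ} (hA : 0 ≤ A) (y : ℝ) : 0 ≤ f A y :=
  mul_nonneg hA (by linarith [neg_one_le_cos (π * y)])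

lemma mul_sqrt_div_sq_add_one {b ε : ℝ} (hb : 0 < b) (hε : 0 ≤ ε) (x y : ℝ) :
    b * ε * √(y ^ 2 * x ^ 2 / b ^ 2 + 1) = √((x * ε * y) ^ 2 + (b * ε) ^ 2) := by
  have factor : (x * ε * y) ^ 2 + (b * ε) ^ 2 = (b * ε) ^ 2 * (y ^ 2 * x ^ 2 / b ^ 2 + 1) := by
    field_simp
  rw [factor, sqrt_mul (sq_nonneg _), sqrt_sq (by positivity)]

/-- If `ξ ∈ (0, ξ₀)` is such that `c = (0,bε,0)` satisfies
`d_g(u, c) = bε √((1 + ξ)² a²/b² + 1)`, then both `c` and `−c` are equidistant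
(in the geodesic distance) from the four vertices `u, v, w, p` of the
tetrahedron: the tetrahedron has the two distinct circumcentres `c` and `−c`. -/
theorem two_circumcentres (A : ℝ) (hA0 : 0 < A) (hA : A ≤ 3 / 8)
    (ε b ξ : ℝ) (hε : 0 < ε) (hb : 0 < b) (hξ0 : 0 < ξ) (hξ1 : ξ < ξ₀ A)
    (hc : dg A (pt 0 0 (a * ε)) (pt 0 (b * ε) 0)
        = b * ε * Real.sqrt ((1 + ξ) ^ 2 * a ^ 2 / b ^ 2 + 1)) :
    (dg A (pt 0 (b * ε) 0) (pt 0 0 (a * ε))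
        = dg A (pt 0 (b * ε) 0) (pt 0 0 (-(a * ε))) ∧
      dg A (pt 0 (b * ε) 0) (pt 0 0 (-(a * ε)))
        = dg A (pt 0 (b * ε) 0) (pt (a * ε * (1 + ξ)) 0 0) ∧
      dg A (pt 0 (b * ε) 0) (pt (a * ε * (1 + ξ)) 0 0)
        = dg A (pt 0 (b * ε) 0) (pt (-(a * ε * (1 + ξ))) 0 0)) ∧
    (dg A (pt 0 (-(b * ε)) 0) (pt 0 0 (a * ε))
        = dg A (pt 0 (-(b * ε)) 0) (pt 0 0 (-(a * ε))) ∧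
      dg A (pt 0 (-(b * ε)) 0) (pt 0 0 (-(a * ε)))
        = dg A (pt 0 (-(b * ε)) 0) (pt (a * ε * (1 + ξ)) 0 0) ∧
      dg A (pt 0 (-(b * ε)) 0) (pt (a * ε * (1 + ξ)) 0 0)
        = dg A (pt 0 (-(b * ε)) 0) (pt (-(a * ε * (1 + ξ))) 0 0)) := by
  rw [mul_sqrt_div_sq_add_one hb hε.le, dg_eq_curveDist] at hc
  exact two_circumcentres_general (continuous_f A) (f_even A) (f_nonneg hA0.le) hc
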